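/- Let 𝕏 ⊆ ℙ^n_K be a 0-dimensional locally Gorenstein Cayley–Bacharach scheme and σ a homogeneous trace map of degree zero of Q^h(R)/L_0. Then the Hilbert function of δ^σ_𝕏 satisfies HF_{δ^σ_𝕏}(i) = 0 for i < r_𝕏, HF_{δ^σ_𝕏}(i) = deg(𝕏) for i ≥ 2r_𝕏, and 0 ≤ HF_{δ^σ_𝕏}(r_𝕏) ≤ ⋯ ≤ HF_{δ^σ_𝕏}(2r_𝕏−1) < HF_{δ^σ_𝕏}(2r_𝕏) = deg(𝕏); in particular the regularity index of δ^σ_𝕏 is exactly 2r_𝕏. -/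

import Mathlib

noncomputable section

/-! An algebraic model for a 0-dimensional subscheme `𝕏 ⊆ ℙⁿ_K` whose support avoids
the hyperplane `Z(X₀)`.  The scheme is recorded through the local rings
`𝒪_{𝕏,p_j}` at the points `p_1, …, p_s` of its support, together with the germ map
sending a homogeneous polynomial `F` of degree `i` to the tuple of germs
`(F_{p_1}, …, F_{p_s})`; this is the degree-`i` component of the injection
`ĩ : R → Q^h(R) ≅ ∏_j 𝒪_{𝕏,p_j}[T_j, T_j⁻¹]`, where every graded component of
`Q^h(R)` is identified with `Γ = ∏_j 𝒪_{𝕏,p_j}` by dropping the powers of the `T_j`.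
Since `x₀` has germ `1` at every point, the homogeneous coordinate ring
`R = P/I_𝕏` is faithfully encoded by the chain of subspaces
`R_i ≅ V_i = germ(P_i) ⊆ Γ` (with `V_i ⊆ V_{i+1}`, and `V_i = Γ` for `i ≫ 0`). -/

/-- The data of one (fat) point of a 0-dimensional scheme: a finite local `K`-algebra. -/
structure PointData (K : Type) [Field K] : Type 1 where
  carrier : Type
  [ring : CommRing carrier]
  [alg : Algebra K carrier]
  [loc : IsLocalRing carrier]
  [findim : FiniteDimensional K carrier]

attribute [instance] PointData.ring PointData.alg PointData.loc PointData.findim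

/-- A model of a 0-dimensional subscheme of `ℙⁿ_K`, no point of whose support lies
on `Z(X₀)` (coordinates being chosen so that each point has `X₀`-coordinate 1, the
germ of `x₀` at every point is `1`). -/
structure ZeroDimScheme (K : Type) [Field K] (n : ℕ) : Type 1 where
  /-- the number of points in the support -/
  s : ℕ
  spos : 0 < s
  /-- the local rings `𝒪_{𝕏,p_j}` -/
  pt : Fin s → PointData K
  /-- the germ map: for `F` homogeneous of degree `i` this is the degree-`i`
  component of `ĩ : R → Q^h(R)`, i.e. `F ↦ (F_{p_1}, …, F_{p_s})` -/
  germ : MvPolynomial (Fin (n + 1)) K →ₐ[K] ∀ j, (pt j).carrier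
  /-- the germ of `X₀` at each point is `1` -/
  germ_X0 : germ (MvPolynomial.X 0) = 1
  /-- in all large degrees, the germ map is surjective onto `∏_j 𝒪_{𝕏,p_j}`
  (this characterizes `I_𝕏` as the full homogeneous vanishing ideal of the scheme) -/
  eventually_surj : ∃ N : ℕ, ∀ i, N ≤ i →
    Submodule.map germ.toLinearMap
      (MvPolynomial.homogeneousSubmodule (Fin (n + 1)) K i) = ⊤

namespace ZeroDimScheme

variable {K : Type} [Field K] {n : ℕ}

/-- `Γ = ∏_j 𝒪_{𝕏,p_j}`, the common model for every graded component of `Q^h(R)`. -/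
abbrev Gamma (S : ZeroDimScheme K n) : Type := ∀ j, (S.pt j).carrier

variable (S : ZeroDimScheme K n)

/-- `V i ⊆ Γ` is the image of the degree-`i` component `R_i` of the homogeneous
coordinate ring `R` under (the degree-`i` component of) `ĩ`; we identify `R_i ≅ V i`. -/
def V (i : ℕ) : Submodule K S.Gamma :=
  Submodule.map S.germ.toLinearMap
    (MvPolynomial.homogeneousSubmodule (Fin (n + 1)) K i)

/-- `R_i` for `i : ℤ` (zero in negative degrees). -/
def Vz (i : ℤ) : Submodule K S.Gamma := if 0 ≤ i then S.V i.toNat else ⊥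

/-- `deg 𝕏 = Σ_j dim_K 𝒪_{𝕏,p_j}`. -/
def degX : ℕ := Module.finrank K S.Gamma

/-- The Hilbert function `HF_𝕏(i) = dim_K R_i`. -/
def HF (i : ℕ) : ℕ := Module.finrank K (S.V i)

/-- The Hilbert function on `ℤ`. -/
def HFz (i : ℤ) : ℕ := Module.finrank K (S.Vz i)

/-- The regularity index `r_𝕏`: the least `r` with `HF_𝕏(i) = deg 𝕏` for all `i ≥ r`. -/
def rX : ℕ := sInf {r : ℕ | ∀ i, r ≤ i → S.HF i = S.degX}

/-- `κ_j = dim_K κ(p_j)`, the residue field of `𝕏` at `p_j`. -/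
def kappa (j : Fin S.s) : ℕ :=
  Module.finrank K
    ((S.pt j).carrier ⧸
      Submodule.restrictScalars K (IsLocalRing.maximalIdeal (S.pt j).carrier))

/-- `sj` is a socle element of `𝒪_{𝕏,p_j}`, i.e. `sj ∈ Ann(𝔪_{𝕏,p_j})`.  By
Proposition 1.2, the maximal `p_j`-subschemes `𝕐 ⊆ 𝕏` correspond 1-1 to the ideals
of `Γ` generated by `(0,…,0,sj,0,…,0)` with `sj` a *nonzero* socle element. -/
def IsSocle (j : Fin S.s) (sj : (S.pt j).carrier) : Prop :=
  ∀ b ∈ IsLocalRing.maximalIdeal (S.pt j).carrier, sj * b = 0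

/-- The ideal `U = ⟨(0,…,0,sj,0,…,0)⟩` of `Γ` corresponding to the maximal
`p_j`-subscheme `𝕐` determined by the socle element `sj`; one has `I_{𝕐/𝕏} = ĩ⁻¹(U)`. -/
def sepIdeal (j : Fin S.s) (sj : (S.pt j).carrier) : Submodule K S.Gamma :=
  Submodule.restrictScalars K (Ideal.span {(Pi.single j sj : S.Gamma)})

/-- The degree-`i` component `(I_{𝕐/𝕏})_i = R_i ∩ ĩ⁻¹(U)` of the ideal of the maximal
`p_j`-subscheme `𝕐` (given by the socle element `sj`) in `R`. -/
def IY (j : Fin S.s) (sj : (S.pt j).carrier) (i : ℕ) : Submodule K S.Gamma :=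
  S.V i ⊓ S.sepIdeal j sj

/-- `(I_{𝕐/𝕏})_i` for `i : ℤ`. -/
def IYz (j : Fin S.s) (sj : (S.pt j).carrier) (i : ℤ) : Submodule K S.Gamma :=
  S.Vz i ⊓ S.sepIdeal j sj

/-- The Hilbert function `HF_𝕐(i) = HF_𝕏(i) - dim_K (I_{𝕐/𝕏})_i` of the maximal
`p_j`-subscheme `𝕐` given by the socle element `sj`. -/
def HFY (j : Fin S.s) (sj : (S.pt j).carrier) (i : ℕ) : ℕ :=
  S.HF i - Module.finrank K (S.IY j sj i)

/-- `HF_𝕐` on `ℤ`. -/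
def HFYz (j : Fin S.s) (sj : (S.pt j).carrier) (i : ℤ) : ℕ :=
  S.HFz i - Module.finrank K (S.IYz j sj i)

/-- `α_{𝕐/𝕏} = min {i | (I_{𝕐/𝕏})_i ≠ 0}`. -/
def alphaY (j : Fin S.s) (sj : (S.pt j).carrier) : ℕ :=
  sInf {i : ℕ | S.IY j sj i ≠ ⊥}

/-- `μ(a) = min {i | (0,…,0,a T_j^i,0,…,0) ∈ ĩ(R)}` for `a ∈ 𝒪_{𝕏,p_j}`. -/
def mu (j : Fin S.s) (a : (S.pt j).carrier) : ℕ :=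
  sInf {i : ℕ | (Pi.single j a : S.Gamma) ∈ S.V i}

/-- `μ_{𝕐/𝕏}`, the maximal degree of a minimal separator of the maximal
`p_j`-subscheme `𝕐` given by the socle element `sj`; independently of all choices it
equals `max {μ(a·sj) | a ∈ 𝒪_{𝕏,p_j}, a·sj ≠ 0}`. -/
def muY (j : Fin S.s) (sj : (S.pt j).carrier) : ℕ :=
  sSup {m : ℕ | ∃ a : (S.pt j).carrier, a * sj ≠ 0 ∧ m = S.mu j (a * sj)}

/-- `deg_𝕏(p_j) = min {μ_{𝕐/𝕏} | 𝕐 a maximal p_j-subscheme of 𝕏}`. -/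
def degP (j : Fin S.s) : ℕ :=
  sInf {m : ℕ | ∃ sj : (S.pt j).carrier, S.IsSocle j sj ∧ sj ≠ 0 ∧ m = S.muY j sj}

/-- `𝕏` has the Cayley–Bacharach property of degree `d`: `deg_𝕏(p_j) ≥ d + 1` for all `j`. -/
def CBP (d : ℕ) : Prop := ∀ j : Fin S.s, d + 1 ≤ S.degP j

/-- `𝕏` is a Cayley–Bacharach scheme: it has `CBP(r_𝕏 - 1)`. -/
def CayleyBacharach : Prop := S.CBP (S.rX - 1)

/-- The residue class map `𝒪_{𝕏,p_j} → κ(p_j)` as a `K`-linear map. -/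
def resQ (j : Fin S.s) :
    (S.pt j).carrier →ₗ[K]
      ((S.pt j).carrier ⧸
        Submodule.restrictScalars K (IsLocalRing.maximalIdeal (S.pt j).carrier)) :=
  (Submodule.restrictScalars K (IsLocalRing.maximalIdeal (S.pt j).carrier)).mkQ

/-- The residue classes of `e 0, …, e (κ_j - 1)` form a `K`-basis of `κ(p_j)`. -/
def IsResidueBasis (j : Fin S.s) {m : ℕ} (e : Fin m → (S.pt j).carrier) : Prop :=
  LinearIndependent K (fun k => S.resQ j (e k)) ∧
    Submodule.span K (Set.range fun k => S.resQ j (e k)) = ⊤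

/-- A family `τ_j : 𝒪_{𝕏,p_j} → K` of trace maps: each `τ_j` is a generator of
`Hom_K(𝒪_{𝕏,p_j}, K)` as an `𝒪_{𝕏,p_j}`-module.  Such a family exists iff `𝕏` is
locally Gorenstein, and it induces a homogeneous trace map `σ` of degree zero of
`Q^h(R)/L₀` (componentwise). -/
def IsTraceFamily (τ : ∀ j, (S.pt j).carrier →ₗ[K] K) : Prop :=
  ∀ j, Function.Bijective
    (fun a : (S.pt j).carrier => (τ j).comp (LinearMap.mulRight K a))

/-- The total trace `Γ → K`, `y ↦ Σ_j τ_j (y_j)`; on the degree-`i` component of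
`Q^h(R)` the trace map `σ` is `q ↦ (Ttot τ q)·x₀^i`. -/
def Ttot (τ : ∀ j, (S.pt j).carrier →ₗ[K] K) : S.Gamma →ₗ[K] K :=
  ∑ j : Fin S.s, (τ j).comp (LinearMap.proj j)

/-- The degree-`k` component `(𝔠^σ_𝕏)_k ⊆ Q^h(R)_k ≅ Γ` of the Dedekind complementary
module: `g ∈ (𝔠^σ_𝕏)_k` iff `σ(g · R) ⊆ K[x₀]`, i.e. `Ttot τ (g·x) = 0` whenever
`x ∈ R_i` with `k + i < 0`. -/
def Cmod (τ : ∀ j, (S.pt j).carrier →ₗ[K] K) (k : ℤ) : Submodule K S.Gamma :=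
  ⨅ (i : ℕ) (_ : k + (i : ℤ) < 0) (x : S.Gamma) (_ : x ∈ S.V i),
    LinearMap.ker ((S.Ttot τ).comp (LinearMap.mulRight K x))

/-- The degree-`i` component `(δ^σ_𝕏)_i ⊆ Q^h(R)_i ≅ Γ` of the Dedekind different
`δ^σ_𝕏 = {f ∈ Q^h(R) | f · 𝔠^σ_𝕏 ⊆ R}`. -/
def delta (τ : ∀ j, (S.pt j).carrier →ₗ[K] K) (i : ℤ) : Submodule K S.Gamma :=
  ⨅ (k : ℤ) (g : S.Gamma) (_ : g ∈ S.Cmod τ k),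
    Submodule.comap (LinearMap.mulRight K g) (S.Vz (i + k))

/-- The Hilbert function of the Dedekind different. -/
def HFdelta (τ : ∀ j, (S.pt j).carrier →ₗ[K] K) (i : ℤ) : ℕ :=
  Module.finrank K (S.delta τ i)

/-- `𝕏` has minimal Dedekind different: `δ^σ_𝕏 = ⊕_{i ≥ 2 r_𝕏} R_i`
(recall `R_i ≅ Γ` for `i ≥ r_𝕏`). -/
def MinimalDedekind (τ : ∀ j, (S.pt j).carrier →ₗ[K] K) : Prop :=
  ∀ i : ℤ, S.delta τ i = if 2 * (S.rX : ℤ) ≤ i then ⊤ else ⊥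

/-- The degree-`i` component (`i ≥ 0`) of the conductor
`𝔉_{R̃/R} = {f ∈ R̃ | f·R̃ ⊆ R}` of `R` in `R̃ = ∏_j 𝒪_{𝕏,p_j}[T_j]`
(whose degree-`i` component is all of `Γ` for every `i ≥ 0`). -/
def cond (i : ℕ) : Submodule K S.Gamma :=
  ⨅ y : S.Gamma, Submodule.comap (LinearMap.mulRight K y) (S.V i)

/-- The conductor on `ℤ` (zero in negative degrees, where `R̃` vanishes). -/
def condZ (i : ℤ) : Submodule K S.Gamma := if 0 ≤ i then S.cond i.toNat else ⊥

/-- The degree-`i` component of the trace `tr(𝔠^σ_𝕏) = δ^σ_𝕏 · 𝔠^σ_𝕏` of the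
Dedekind complementary module. -/
def trC (τ : ∀ j, (S.pt j).carrier →ₗ[K] K) (i : ℤ) : Submodule K S.Gamma :=
  ⨆ (a : ℤ) (b : ℤ) (_ : a + b = i), S.delta τ a * S.Cmod τ b

/-- `𝕏` is nearly Gorenstein: `𝔪 ⊆ tr(𝔠^σ_𝕏)`. -/
def NearlyGorenstein (τ : ∀ j, (S.pt j).carrier →ₗ[K] K) : Prop :=
  ∀ i : ℤ, 1 ≤ i → S.Vz i ≤ S.trC τ i

/-- `𝕏` is almost Gorenstein: there is an exact sequence of graded `R`-modules
`0 → R → 𝔠^σ_𝕏(-r_𝕏) → C → 0` with `𝔪·C = 0`.  A degree-zero graded injection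
`R → 𝔠^σ_𝕏(-r_𝕏)` is multiplication by an element `g ∈ (𝔠^σ_𝕏)_{-r_𝕏}` with
`Ann_R(g) = 0`, and `𝔪·C = 0` means `𝔪 · 𝔠^σ_𝕏(-r_𝕏) ⊆ g·R`. -/
def AlmostGorenstein (τ : ∀ j, (S.pt j).carrier →ₗ[K] K) : Prop :=
  ∃ g ∈ S.Cmod τ (-(S.rX : ℤ)),
    (∀ i : ℕ, ∀ x ∈ S.V i, x * g = 0 → x = 0) ∧
    (∀ a : ℕ, 1 ≤ a → ∀ x ∈ S.V a, ∀ k : ℤ, ∀ h ∈ S.Cmod τ k,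
      x * h ∈ Submodule.map (LinearMap.mulRight K g) (S.Vz ((a : ℤ) + k + (S.rX : ℤ))))

/-- `𝕏` is arithmetically Gorenstein, i.e. `R` is a Gorenstein ring; equivalently the
canonical module is free of rank one: `𝔠^σ_𝕏 = g·R` for some `g ∈ (𝔠^σ_𝕏)_{-r_𝕏}`. -/
def ArithGorenstein (τ : ∀ j, (S.pt j).carrier →ₗ[K] K) : Prop :=
  ∃ g ∈ S.Cmod τ (-(S.rX : ℤ)),
    ∀ k : ℤ, S.Cmod τ k = Submodule.map (LinearMap.mulRight K g) (S.Vz (k + (S.rX : ℤ)))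

/-- `𝕏` is level: the socle of `R̄ = R/⟨x₀⟩` equals `R̄_{r_𝕏}`, i.e. no nonzero
homogeneous element of `R̄` of degree `< r_𝕏` is annihilated by `𝔪̄` (recall
`R̄_i ≅ V i / V (i-1)` and `x₀`-multiplication preserves germs). -/
def Level : Prop :=
  ∀ i : ℕ, i < S.rX → ∀ x ∈ S.V i,
    (∀ a : ℕ, 1 ≤ a → ∀ y ∈ S.V a, x * y ∈ S.Vz ((i : ℤ) + (a : ℤ) - 1)) →
      x ∈ S.Vz ((i : ℤ) - 1)

/-- The subspace `{x ∈ Γ | x_k = 0 for k ≠ j}` of `Γ`: the degreewise model for the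
ideal of the subscheme `𝕐_j ⊆ 𝕏` with `I_{𝕐_j} = ∩_{k ≠ j} I_k`. -/
def Wj (j : Fin S.s) : Submodule K S.Gamma :=
  ⨅ (k : Fin S.s) (_ : k ≠ j),
    LinearMap.ker (LinearMap.proj k : S.Gamma →ₗ[K] (S.pt k).carrier)

/-- `(I_{𝕐_j/𝕏})_i` for the subscheme `𝕐_j` complementary to `p_j`. -/
def IW (j : Fin S.s) (i : ℕ) : Submodule K S.Gamma := S.V i ⊓ S.Wj j

/-- The Hilbert function of the subscheme `𝕐_j` complementary to `p_j`. -/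
def HFW (j : Fin S.s) (i : ℕ) : ℕ := S.HF i - Module.finrank K (S.IW j i)

/-- `α_{𝕐_j/𝕏}` for the subscheme `𝕐_j` complementary to `p_j`. -/
def alphaW (j : Fin S.s) : ℕ := sInf {i : ℕ | S.IW j i ≠ ⊥}

/-- The subspace `{x ∈ Γ | x_k = 0 for k ∉ {j₁, j₂}}` of `Γ`: the degreewise model for
the ideal in `R` of the subscheme of the reduced scheme `𝕏` complementary to `{p_{j₁}, p_{j₂}}`. -/
def Wpair (j1 j2 : Fin S.s) : Submodule K S.Gamma :=
  ⨅ (k : Fin S.s) (_ : k ≠ j1) (_ : k ≠ j2),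
    LinearMap.ker (LinearMap.proj k : S.Gamma →ₗ[K] (S.pt k).carrier)

/-- The homogeneous vanishing ideal `I_𝕏 ⊆ P`. -/
def IX : Ideal (MvPolynomial (Fin (n + 1)) K) :=
  Ideal.span {F | (∃ i : ℕ, F ∈ MvPolynomial.homogeneousSubmodule (Fin (n + 1)) K i) ∧
    S.germ F = 0}

/-- The `n×n`-minor (Jacobian determinant with respect to `X_1, …, X_n`) of an
`n`-tuple of polynomials. -/
def jacMinor (Fs : Fin n → MvPolynomial (Fin (n + 1)) K) : MvPolynomial (Fin (n + 1)) K :=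
  Matrix.det (Matrix.of fun a b : Fin n => MvPolynomial.pderiv (Fin.succ b) (Fs a))

/-- The preimage in `P` of the Kähler different `ϑ_𝕏 ⊆ R`: the ideal generated by
`I_𝕏` together with all `n×n` minors of the Jacobian matrix of elements of `I_𝕏`. -/
def KaehlerIdeal : Ideal (MvPolynomial (Fin (n + 1)) K) :=
  S.IX ⊔ Ideal.span {m | ∃ Fs : Fin n → MvPolynomial (Fin (n + 1)) K,
    (∀ a, Fs a ∈ S.IX) ∧ m = jacMinor Fs}

/-- The degree-`i` component of the Kähler different `ϑ_𝕏 ⊆ R`, viewed inside `Γ`. -/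
def thetaPiece (i : ℕ) : Submodule K S.Gamma :=
  Submodule.map S.germ.toLinearMap
    (Submodule.restrictScalars K S.KaehlerIdeal ⊓
      MvPolynomial.homogeneousSubmodule (Fin (n + 1)) K i)

end ZeroDimScheme

end

/-! By local Gorenstein duality the form `(g, x) ↦ σ(g x)` on `Γ = ∏_j 𝒪_{𝕏,p_j}` is
nondegenerate, and `(𝔠^σ_𝕏)_{-i-1}` is the orthogonal complement of `R_i`; in particular `𝔠^σ_𝕏`
vanishes below degree `-r_𝕏`.  The Cayley–Bacharach property of degree `d` prevents
`R_d` from containing a nonzero ideal of `Γ`: such an ideal would contain a nonzero socle element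
of some `𝒪_{𝕏,p_j}`, hence all minimal separators of a maximal `p_j`-subscheme would have degree
at most `d`.

If `i ≤ d` and `f ∈ (δ^σ_𝕏)_i`, then `f · (𝔠^σ_𝕏)_{-d-1} = 0`, so the ideal `fΓ` is orthogonal to
`(𝔠^σ_𝕏)_{-d-1}`, hence lies in `R_d` by double orthogonality, and `f = 0`.  If `(δ^σ_𝕏)_{2d+1}`
were all of `Γ`, then `R_d` would contain the ideal generated by `(𝔠^σ_𝕏)_{-d-1}`, forcing
`(𝔠^σ_𝕏)_{-d-1} = 0` and `R_d = Γ`.  The proposition is the case `d = r_𝕏 - 1`. -/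

theorem exists_mul_ne_zero_forall_mem_mul_eq_zero {A : Type*} [CommSemiring A] {I : Ideal A}
    (hI : IsNilpotent I) {a : A} (ha : a ≠ 0) :
    ∃ c, a * c ≠ 0 ∧ ∀ b ∈ I, a * c * b = 0 := by
  have hpow_zero : ¬Ideal.span {a} * I ^ 0 = ⊥ := by simpa using ha
  have hpow : ∃ m, Ideal.span {a} * I ^ m = ⊥ := by
    obtain ⟨m, hm⟩ := hI
    exact ⟨m, by rw [hm, Ideal.zero_eq_bot, Ideal.mul_bot]⟩
  obtain ⟨m, hne, hbot⟩ := Nat.exists_not_and_succ_of_not_zero_of_exists hpow_zero hpow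
  rw [pow_succ, ← mul_assoc] at hbot
  obtain ⟨y, hy, hy0⟩ := Submodule.exists_mem_ne_zero_of_ne_bot hne
  obtain ⟨c, -, rfl⟩ := Ideal.mem_span_singleton_mul.1 hy
  exact ⟨c, hy0, fun b hb => by simpa only [hbot, Ideal.mem_bot] using Ideal.mul_mem_mul hy hb⟩

namespace ZeroDimScheme

variable {K : Type} [Field K] {n : ℕ} (S : ZeroDimScheme K n)

instance : Nontrivial S.Gamma :=
  Pi.nontrivial_at ⟨0, S.spos⟩

theorem V_mono : Monotone S.V := by
  refine monotone_nat_of_le_succ fun i => ?_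
  rintro _ ⟨F, hF, rfl⟩
  refine ⟨F * MvPolynomial.X 0, ?_, by simp [S.germ_X0]⟩
  exact MvPolynomial.IsHomogeneous.mul hF (MvPolynomial.isHomogeneous_X K 0)

theorem V_eq_top {i : ℕ} (hi : S.rX ≤ i) : S.V i = ⊤ := by
  have hne : {r : ℕ | ∀ i, r ≤ i → S.HF i = S.degX}.Nonempty := by
    obtain ⟨N, hN⟩ := S.eventually_surj
    refine ⟨N, fun i hi => ?_⟩
    rw [HF, V, hN i hi, degX, finrank_top]
  exact Submodule.eq_top_of_finrank_eq (Nat.sInf_mem hne i hi)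

theorem Vz_natCast (i : ℕ) : S.Vz i = S.V i := by
  simp [Vz]

theorem Vz_eq_bot {i : ℤ} (hi : i < 0) : S.Vz i = ⊥ :=
  if_neg hi.not_ge

theorem Vz_mono : Monotone S.Vz := by
  intro i k hik
  rcases lt_or_ge i 0 with hi | hi
  · exact (S.Vz_eq_bot hi).trans_le bot_le
  · lift i to ℕ using hi
    lift k to ℕ using by omega
    simpa only [Vz_natCast] using S.V_mono (by omega)

theorem Vz_eq_top {i : ℤ} (hi : S.rX ≤ i) : S.Vz i = ⊤ := by
  lift i to ℕ using by omega
  rw [Vz_natCast, S.V_eq_top (by omega)]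

section Conductor

variable {S} {d : ℕ} {f : S.Gamma}

theorem mem_cond_iff : f ∈ S.cond d ↔ ∀ y, f * y ∈ S.V d := by
  simp [cond]

theorem muY_le_of_mem_cond (hf : f ∈ S.cond d) (j : Fin S.s) (c : (S.pt j).carrier) :
    S.muY j (f j * c) ≤ d := by
  refine csSup_le' ?_
  rintro _ ⟨a, -, rfl⟩
  refine Nat.sInf_le ?_
  have hsingle : (Pi.single j (a * (f j * c)) : S.Gamma) = f * Pi.single j (a * c) := by
    rw [← Pi.single_mul_right, mul_left_comm]
  exact hsingle ▸ mem_cond_iff.1 hf _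

theorem exists_isSocle_mul_ne_zero {j : Fin S.s} {a : (S.pt j).carrier} (ha : a ≠ 0) :
    ∃ c, S.IsSocle j (a * c) ∧ a * c ≠ 0 := by
  have : IsArtinianRing (S.pt j).carrier := IsArtinianRing.of_finite K _
  have hnil : IsNilpotent (IsLocalRing.maximalIdeal (S.pt j).carrier) :=
    (isArtinianRing_iff_isNilpotent_maximalIdeal _).1 this
  obtain ⟨c, hne, hsocle⟩ := exists_mul_ne_zero_forall_mem_mul_eq_zero hnil ha
  exact ⟨c, hsocle, hne⟩

theorem cond_eq_bot_of_CBP (hd : S.CBP d) : S.cond d = ⊥ := by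
  refine (Submodule.eq_bot_iff _).2 fun f hf => ?_
  by_contra hne
  obtain ⟨j, hj⟩ := Function.ne_iff.1 hne
  obtain ⟨c, hsocle, hc⟩ := exists_isSocle_mul_ne_zero hj
  refine (hd j).not_gt (Nat.lt_succ_of_le ?_)
  calc S.degP j ≤ S.muY j (f j * c) := Nat.sInf_le ⟨_, hsocle, hc, rfl⟩
    _ ≤ d := muY_le_of_mem_cond hf j c

theorem V_ne_top_of_CBP (hd : S.CBP d) : S.V d ≠ ⊤ := by
  intro htop
  have hone : (1 : S.Gamma) ∈ S.cond d := mem_cond_iff.2 fun y => htop ▸ Submodule.mem_top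
  rw [cond_eq_bot_of_CBP hd, Submodule.mem_bot] at hone
  exact one_ne_zero hone

/-- `rX - 1` is a truncated subtraction, so `CayleyBacharach` excludes `rX = 0`, i.e. a single
reduced `K`-rational point. -/
theorem CayleyBacharach.rX_pos (hCB : S.CayleyBacharach) : 0 < S.rX := by
  by_contra h
  exact V_ne_top_of_CBP hCB (S.V_eq_top (by omega))

end Conductor

section TraceForm

variable (τ : ∀ j, (S.pt j).carrier →ₗ[K] K)

/-- The trace form `(g, x) ↦ Σ_j τ_j (g_j x_j)` on `Γ`, the degreewise incarnation of the pairing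
`(g, x) ↦ σ(g x)` on `Q^h(R)`. It exhibits the components of `𝔠^σ_𝕏` as orthogonal complements. -/
noncomputable def traceForm : LinearMap.BilinForm K S.Gamma :=
  (LinearMap.mul K S.Gamma).compr₂ (S.Ttot τ)

theorem traceForm_apply (g x : S.Gamma) : S.traceForm τ g x = S.Ttot τ (g * x) :=
  rfl

theorem traceForm_isSymm : (S.traceForm τ).IsSymm :=
  ⟨fun g x => by rw [traceForm_apply, traceForm_apply, mul_comm]⟩

theorem Ttot_single (j : Fin S.s) (a : (S.pt j).carrier) :
    S.Ttot τ (Pi.single j a) = τ j a := by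
  simp [Ttot, LinearMap.apply_single]

theorem Cmod_neg_succ (i : ℕ) :
    S.Cmod τ (-(i + 1 : ℤ)) = (S.traceForm τ).orthogonal (S.V i) := by
  ext g
  simp only [Cmod, Submodule.mem_iInf, LinearMap.mem_ker, LinearMap.comp_apply,
    LinearMap.mulRight_apply, LinearMap.BilinForm.mem_orthogonal_iff, traceForm_apply, mul_comm g]
  exact ⟨fun hg => hg i (by omega), fun hg k hk x hx => hg x (S.V_mono (by omega) hx)⟩

variable {S τ}

theorem traceForm_nondegenerate (hτ : S.IsTraceFamily τ) :
    (S.traceForm τ).Nondegenerate := by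
  refine (S.traceForm_isSymm τ).isRefl.nondegenerate_iff_separatingLeft.2 fun g hg => ?_
  funext j
  refine (hτ j).1 (LinearMap.ext fun a => ?_)
  have hga : τ j (g j * a) = 0 := by
    rw [← S.Ttot_single τ, Pi.single_mul_right]
    exact hg _
  simpa [mul_comm] using hga

theorem Cmod_eq_bot (hτ : S.IsTraceFamily τ) {k : ℤ} (hk : k < -S.rX) : S.Cmod τ k = ⊥ := by
  obtain ⟨i, rfl⟩ : ∃ i : ℕ, k = -(i + 1 : ℤ) := ⟨(-k - 1).toNat, by omega⟩
  rw [Cmod_neg_succ, S.V_eq_top (by omega),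
    LinearMap.BilinForm.orthogonal_top_eq_bot (traceForm_nondegenerate hτ)]

theorem orthogonal_Cmod_neg_succ (hτ : S.IsTraceFamily τ) (i : ℕ) :
    (S.traceForm τ).orthogonal (S.Cmod τ (-(i + 1 : ℤ))) = S.V i := by
  rw [Cmod_neg_succ, LinearMap.BilinForm.orthogonal_orthogonal (traceForm_nondegenerate hτ)
    (S.traceForm_isSymm τ).isRefl]

end TraceForm

section Different

variable {S} {τ : ∀ j, (S.pt j).carrier →ₗ[K] K}

theorem mem_delta_iff {i : ℤ} {f : S.Gamma} :
    f ∈ S.delta τ i ↔ ∀ k, ∀ g ∈ S.Cmod τ k, f * g ∈ S.Vz (i + k) := by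
  simp [delta]

theorem delta_mono : Monotone (S.delta τ) := fun i i' hi f hf =>
  mem_delta_iff.2 fun k g hg => S.Vz_mono (by omega) (mem_delta_iff.1 hf k g hg)

theorem delta_eq_top (hτ : S.IsTraceFamily τ) {i : ℤ} (hi : 2 * S.rX ≤ i) :
    S.delta τ i = ⊤ := by
  refine Submodule.eq_top_iff'.2 fun f => mem_delta_iff.2 fun k g hg => ?_
  rcases lt_or_ge k (-S.rX) with hk | hk
  · rw [Cmod_eq_bot hτ hk, Submodule.mem_bot] at hg
    simp [hg]
  · simp [S.Vz_eq_top (show (S.rX : ℤ) ≤ i + k by omega)]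

theorem delta_eq_bot_of_CBP (hτ : S.IsTraceFamily τ) {d : ℕ} (hd : S.CBP d) {i : ℤ}
    (hi : i ≤ d) : S.delta τ i = ⊥ := by
  rw [eq_bot_iff, ← cond_eq_bot_of_CBP hd]
  intro f hf
  have hannihilates : ∀ g ∈ S.Cmod τ (-(d + 1 : ℤ)), f * g = 0 := fun g hg => by
    simpa only [S.Vz_eq_bot (show i + -(d + 1 : ℤ) < 0 by omega), Submodule.mem_bot]
      using mem_delta_iff.1 hf _ g hg
  refine mem_cond_iff.2 fun y => ?_
  rw [← orthogonal_Cmod_neg_succ hτ d]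
  intro g hg
  rw [traceForm_apply, mul_left_comm, ← mul_assoc, hannihilates g hg, zero_mul, map_zero]

theorem delta_ne_top_of_CBP (hτ : S.IsTraceFamily τ) {d : ℕ} (hd : S.CBP d) :
    S.delta τ (2 * d + 1) ≠ ⊤ := by
  intro htop
  have hCmod : S.Cmod τ (-(d + 1 : ℤ)) = ⊥ := by
    rw [eq_bot_iff, ← cond_eq_bot_of_CBP hd]
    refine fun g hg => mem_cond_iff.2 fun y => ?_
    have hy : y ∈ S.delta τ (2 * d + 1) := htop ▸ Submodule.mem_top
    rw [mul_comm, ← Vz_natCast]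
    convert mem_delta_iff.1 hy _ g hg using 2
    ring
  refine V_ne_top_of_CBP hd ?_
  rw [← orthogonal_Cmod_neg_succ hτ d, hCmod, LinearMap.BilinForm.orthogonal_bot]

end Different

end ZeroDimScheme

/-- Proposition 4.8 / `propSec3.8`.  Let `𝕏 ⊆ ℙⁿ_K` be a
0-dimensional locally Gorenstein Cayley–Bacharach scheme and `σ` a homogeneous trace
map of degree zero of `Q^h(R)/L₀`.  Then the Hilbert function of `δ^σ_𝕏` satisfies
`HF_{δ^σ_𝕏}(i) = 0` for `i < r_𝕏`, `HF_{δ^σ_𝕏}(i) = deg 𝕏` for `i ≥ 2 r_𝕏`, and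
`0 ≤ HF_{δ^σ_𝕏}(r_𝕏) ≤ ⋯ ≤ HF_{δ^σ_𝕏}(2r_𝕏 - 1) < HF_{δ^σ_𝕏}(2r_𝕏) = deg 𝕏`;
in particular the regularity index of `δ^σ_𝕏` is exactly `2 r_𝕏`. -/
theorem dedekind_CB_stmt7 (K : Type) [Field K] (n : ℕ) (S : ZeroDimScheme K n)
    (τ : ∀ j, (S.pt j).carrier →ₗ[K] K) (hτ : S.IsTraceFamily τ)
    (hCB : S.CayleyBacharach) :
    (∀ i : ℤ, i < (S.rX : ℤ) → S.HFdelta τ i = 0) ∧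
    (∀ i : ℤ, 2 * (S.rX : ℤ) ≤ i → S.HFdelta τ i = S.degX) ∧
    (∀ i : ℤ, (S.rX : ℤ) ≤ i → i < 2 * (S.rX : ℤ) →
      S.HFdelta τ i ≤ S.HFdelta τ (i + 1)) ∧
    S.HFdelta τ (2 * (S.rX : ℤ) - 1) < S.degX := by
  obtain ⟨d, hd⟩ : ∃ d, S.rX = d + 1 := Nat.exists_eq_add_one.2 hCB.rX_pos
  have hCBP : S.CBP d := by
    simpa only [ZeroDimScheme.CayleyBacharach, hd, Nat.add_sub_cancel] using hCB
  refine ⟨fun i hi => ?_, fun i hi => ?_, fun i _ _ => ?_, Submodule.finrank_lt ?_⟩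
  · rw [ZeroDimScheme.HFdelta, ZeroDimScheme.delta_eq_bot_of_CBP hτ hCBP (by omega), finrank_bot]
  · rw [ZeroDimScheme.HFdelta, ZeroDimScheme.delta_eq_top hτ hi, finrank_top, ZeroDimScheme.degX]
  · exact Submodule.finrank_mono (ZeroDimScheme.delta_mono (by omega))
  · convert ZeroDimScheme.delta_ne_top_of_CBP hτ hCBP using 2
    omega
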